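/- arXiv:1506.02555 — 5 statements merged into one kernel-verified Lean document; each statement's English description precedes it below -/
import Mathlib

section
/- For every real number γ > 1 and every integer n ≥ 1, there exists a real number w₀ > 0 such that (1 − γ)·R_n(w₀) + 2·w₀²·R_n'(w₀) = 0. -/
/-- `R n x = ∑_{m=0}^{n} ((n+m)! / (m! (n-m)!)) x^m`, real version. -/
noncomputable def R (n : ℕ) (x : ℝ) : ℝ :=
  ∑ m ∈ Finset.range (n + 1),
    ((Nat.factorial (n + m) : ℝ) / ((Nat.factorial m : ℝ) * (Nat.factorial (n - m) : ℝ))) * x ^ m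

/-! The left-hand side is a real polynomial in `w₀`. Since `R_n` has degree `n ≥ 1`, the factor
`w₀ ^ 2` makes the derivative term dominate in degree, so the leading coefficient is positive,
whereas the constant term is `1 - γ < 0`. -/

open Polynomial Nat

lemma exists_pos_eval_eq_zero_of_leadingCoeff_pos {p : ℝ[X]} (h₀ : p.eval 0 < 0)
    (hlead : 0 < p.leadingCoeff) : ∃ x : ℝ, 0 < x ∧ p.eval x = 0 := by
  have hdeg : 0 < p.degree := by
    by_contra! hle
    rw [eq_C_of_degree_le_zero hle] at h₀ hlead
    rw [eval_C] at h₀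
    rw [leadingCoeff_C] at hlead
    exact h₀.not_gt hlead
  have htop := p.tendsto_atTop_of_leadingCoeff_nonneg hdeg hlead.le
  exact intermediate_value_Ioi p.continuous.continuousOn htop h₀

section DegreeOfDerivativeTerm

variable {A : Type*} [Semiring A] [NoZeroDivisors A] [IsAddTorsionFree A] {p q : A[X]}

lemma degree_lt_degree_mul_derivative (hp : p.natDegree ≠ 0) (hq : 2 ≤ q.natDegree) :
    p.degree < (q * derivative p).degree := by
  refine degree_lt_degree ?_
  have hq₀ : q ≠ 0 := ne_zero_of_natDegree_gt hq
  rw [natDegree_mul hq₀ (derivative_ne_zero.2 hp), natDegree_derivative]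
  lia

lemma leadingCoeff_smul_add_mul_derivative (c : A) (hp : p.natDegree ≠ 0)
    (hq : 2 ≤ q.natDegree) :
    (c • p + q * derivative p).leadingCoeff =
      q.leadingCoeff * (p.leadingCoeff * p.natDegree) := by
  have hlt : (c • p).degree < (q * derivative p).degree :=
    (degree_smul_le c p).trans_lt (degree_lt_degree_mul_derivative hp hq)
  rw [leadingCoeff_add_of_degree_lt hlt, leadingCoeff_mul, leadingCoeff_derivative]

end DegreeOfDerivativeTerm

lemma exists_pos_mul_eval_add_mul_eval_derivative_eq_zero {p q : ℝ[X]} {c : ℝ}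
    (hp : p.natDegree ≠ 0) (hq : 2 ≤ q.natDegree) (hlead : 0 < q.leadingCoeff * p.leadingCoeff)
    (h₀ : c * p.eval 0 + q.eval 0 * (derivative p).eval 0 < 0) :
    ∃ x : ℝ, 0 < x ∧ c * p.eval x + q.eval x * (derivative p).eval x = 0 := by
  have hpos : 0 < (c • p + q * derivative p).leadingCoeff := by
    rw [leadingCoeff_smul_add_mul_derivative c hp hq, ← mul_assoc]
    exact mul_pos hlead (mod_cast Nat.pos_of_ne_zero hp)
  simpa only [eval_add, eval_mul, eval_smul, smul_eq_mul] using
    exists_pos_eval_eq_zero_of_leadingCoeff_pos (by simpa using h₀) hpos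

/-- `R n` as a formal polynomial, so that degrees and coefficients are available. In terms of the
Bessel polynomials `y_n` it is `y_n(2X)`. -/
noncomputable def rescaledBessel (n : ℕ) : ℝ[X] :=
  ∑ m ∈ Finset.range (n + 1), C (((n + m)! : ℝ) / ((m ! : ℝ) * ((n - m)! : ℝ))) * X ^ m

namespace rescaledBessel

variable (n : ℕ)

lemma eval_eq_R (x : ℝ) : (rescaledBessel n).eval x = R n x := by
  simp [rescaledBessel, R, eval_finsetSum]

lemma eval_derivative_eq_deriv_R (x : ℝ) :
    (derivative (rescaledBessel n)).eval x = deriv (R n) x := by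
  rw [← Polynomial.deriv, funext (eval_eq_R n)]

variable {n} in
lemma coeff_of_le {m : ℕ} (hm : m ≤ n) :
    (rescaledBessel n).coeff m = ((n + m)! : ℝ) / ((m ! : ℝ) * ((n - m)! : ℝ)) := by
  simp [rescaledBessel, finsetSum_coeff, hm]

variable {n} in
lemma coeff_pos {m : ℕ} (hm : m ≤ n) : 0 < (rescaledBessel n).coeff m := by
  rw [coeff_of_le hm]
  positivity

lemma natDegree_eq : (rescaledBessel n).natDegree = n := by
  refine natDegree_eq_of_le_of_coeff_ne_zero ?_ (coeff_pos le_rfl).ne'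
  refine natDegree_sum_le_of_forall_le _ _ fun m hm ↦ ?_
  exact (natDegree_C_mul_X_pow_le _ m).trans (Finset.mem_range_succ_iff.1 hm)

lemma leadingCoeff_pos : 0 < (rescaledBessel n).leadingCoeff := by
  rw [leadingCoeff, natDegree_eq]
  exact coeff_pos le_rfl

lemma eval_zero_pos : 0 < (rescaledBessel n).eval 0 := by
  rw [← coeff_zero_eq_eval_zero]
  exact coeff_pos n.zero_le

end rescaledBessel

/-- For every real `γ > 1` and every integer `n ≥ 1` there is a real `w₀ > 0` with
`(1 − γ) R_n(w₀) + 2 w₀² R_n'(w₀) = 0`. -/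
theorem exists_pos_root (γ : ℝ) (hγ : 1 < γ) (n : ℕ) (hn : 1 ≤ n) :
    ∃ w₀ : ℝ, 0 < w₀ ∧ (1 - γ) * R n w₀ + 2 * w₀ ^ 2 * deriv (R n) w₀ = 0 := by
  have hdeg : (rescaledBessel n).natDegree ≠ 0 := by
    rw [rescaledBessel.natDegree_eq]
    exact one_le_iff_ne_zero.1 hn
  have hsq : (C (2 : ℝ) * X ^ 2).natDegree = 2 := natDegree_C_mul_X_pow 2 2 two_ne_zero
  have hlead : 0 < (C (2 : ℝ) * X ^ 2).leadingCoeff * (rescaledBessel n).leadingCoeff := by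
    rw [leadingCoeff_C_mul_X_pow]
    exact mul_pos two_pos (rescaledBessel.leadingCoeff_pos n)
  have hneg : (1 - γ) * (rescaledBessel n).eval 0 < 0 :=
    mul_neg_of_neg_of_pos (sub_neg.2 hγ) (rescaledBessel.eval_zero_pos n)
  obtain ⟨w, hw, hroot⟩ := exists_pos_mul_eval_add_mul_eval_derivative_eq_zero
    (c := 1 - γ) hdeg hsq.ge hlead (by simpa using hneg)
  refine ⟨w, hw, ?_⟩
  simpa [rescaledBessel.eval_eq_R, rescaledBessel.eval_derivative_eq_deriv_R] using hroot
end

section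
/- For every integer n ≥ 2 and every real number w with w ≥ 1/(2√3), one has w·R_n'(w) ≥ R_n(w). -/
/-!
The Euler operator multiplies the coefficient of degree `m` by `m`, so
`w * R_n'(w) - R_n(w) = ∑ (m - 1) a_m w ^ m`. For `w ≥ 0` the only negative term is the constant
one, `-1`, and the quadratic term alone outweighs it as soon as `a_2 w ^ 2 ≥ 1`.
-/

open Polynomial

section NonnegCoeff

variable {S : Type*}

theorem coeff_zero_add_coeff_mul_pow_le_eval [Semiring S] [PartialOrder S] [IsOrderedRing S]
    {p : S[X]} {k : ℕ} (hk : k ≠ 0) (hp : ∀ m, m ≠ 0 → m ≠ k → 0 ≤ p.coeff m)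
    {x : S} (hx : 0 ≤ x) : p.coeff 0 + p.coeff k * x ^ k ≤ p.eval x := by
  have hdeg : p.natDegree < p.natDegree + k + 1 := by lia
  have hsub : {0, k} ⊆ Finset.range (p.natDegree + k + 1) := by grind
  calc p.coeff 0 + p.coeff k * x ^ k
      = ∑ m ∈ {0, k}, p.coeff m * x ^ m := by simp [Finset.sum_pair hk.symm]
    _ ≤ ∑ m ∈ Finset.range (p.natDegree + k + 1), p.coeff m * x ^ m :=
        Finset.sum_le_sum_of_subset_of_nonneg hsub fun m _ hm ↦
          mul_nonneg (hp m (by grind) (by grind)) (pow_nonneg hx m)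
    _ = p.eval x := (eval_eq_sum_range' hdeg x).symm

theorem coeff_X_mul_derivative_sub_self [CommRing S] (p : S[X]) (m : ℕ) :
    (X * derivative p - p).coeff m = (m - 1) * p.coeff m := by
  cases m with
  | zero => simp
  | succ m =>
    rw [coeff_sub, coeff_X_mul, coeff_derivative]
    push_cast
    ring

theorem eval_le_mul_eval_derivative [CommRing S] [PartialOrder S] [IsOrderedRing S]
    {p : S[X]} (hp : ∀ m, 2 ≤ m → 0 ≤ p.coeff m) {x : S} (hx : 0 ≤ x) {k : ℕ} (hk : k ≠ 0)
    (h : p.coeff 0 ≤ (k - 1) * p.coeff k * x ^ k) :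
    p.eval x ≤ x * (derivative p).eval x := by
  have hcoeff : ∀ m, m ≠ 0 → m ≠ k → 0 ≤ (X * derivative p - p).coeff m := by
    intro m hm _
    rw [coeff_X_mul_derivative_sub_self]
    obtain rfl | hm2 : m = 1 ∨ 2 ≤ m := by lia
    · simp
    · have hm1 : (1 : S) ≤ m := by
        simpa only [Nat.cast_one] using Nat.mono_cast (α := S) (one_le_two.trans hm2)
      exact mul_nonneg (sub_nonneg.2 hm1) (hp m hm2)
  have heval := coeff_zero_add_coeff_mul_pow_le_eval hk hcoeff hx
  simp only [coeff_X_mul_derivative_sub_self, eval_sub, eval_mul, eval_X, Nat.cast_zero,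
    zero_sub, neg_one_mul] at heval
  have hconst : 0 ≤ -p.coeff 0 + (k - 1) * p.coeff k * x ^ k := by
    rwa [neg_add_eq_sub, sub_nonneg]
  exact sub_nonneg.1 (hconst.trans heval)

end NonnegCoeff

theorem one_div_twelve_le_sq {w : ℝ} (hw : 1 / (2 * √3) ≤ w) : 1 / 12 ≤ w ^ 2 := by
  calc (1 / 12 : ℝ) = (1 / (2 * √3)) ^ 2 := by norm_num [div_pow, mul_pow]
    _ ≤ w ^ 2 := by gcongr

namespace R

/-- The function `R n` as a formal polynomial, which gives access to its coefficients and its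
algebraic derivative. -/
noncomputable def poly (n : ℕ) : ℝ[X] :=
  ∑ m ∈ Finset.range (n + 1), monomial m ((n + m).factorial / (m.factorial * (n - m).factorial) : ℝ)

theorem eval_poly (n : ℕ) (x : ℝ) : (poly n).eval x = R n x := by
  simp [poly, R, eval_finsetSum]

theorem deriv_eq_eval_derivative_poly (n : ℕ) (x : ℝ) :
    deriv (R n) x = (derivative (poly n)).eval x := by
  rw [← Polynomial.deriv, funext (eval_poly n)]

theorem coeff_poly (n m : ℕ) :
    (poly n).coeff m =
      if m ≤ n then ((n + m).factorial / (m.factorial * (n - m).factorial) : ℝ) else 0 := by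
  simp [poly, coeff_monomial]

theorem coeff_poly_nonneg (n m : ℕ) : 0 ≤ (poly n).coeff m := by
  rw [coeff_poly]
  positivity

theorem coeff_poly_zero (n : ℕ) : (poly n).coeff 0 = 1 := by
  simp [coeff_poly, Nat.factorial_ne_zero]

theorem coeff_poly_two (n : ℕ) :
    (poly n).coeff 2 = ((n + 2) * (n + 1) * n * (n - 1) / 2 : ℝ) := by
  match n with
  | 0 | 1 => simp [coeff_poly]
  | n + 2 =>
    rw [coeff_poly, if_pos (by lia), Nat.add_sub_cancel]
    simp only [Nat.factorial_succ, Nat.factorial_zero]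
    push_cast
    field_simp
    ring

theorem twelve_le_coeff_poly_two {n : ℕ} (hn : 2 ≤ n) : 12 ≤ (poly n).coeff 2 := by
  have hn' : (2 : ℝ) ≤ n := by exact_mod_cast hn
  calc (12 : ℝ) = (2 + 2) * (2 + 1) * 2 * (2 - 1) / 2 := by norm_num
    _ ≤ (n + 2) * (n + 1) * n * (n - 1) / 2 := by gcongr
    _ = (poly n).coeff 2 := (coeff_poly_two n).symm

theorem one_le_coeff_poly_two_mul_sq {n : ℕ} (hn : 2 ≤ n) {w : ℝ} (hw : 1 / (2 * √3) ≤ w) :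
    1 ≤ (poly n).coeff 2 * w ^ 2 := by
  calc (1 : ℝ) = 12 * (1 / 12) := by norm_num
    _ ≤ (poly n).coeff 2 * w ^ 2 := by
      gcongr
      exacts [coeff_poly_nonneg n 2, twelve_le_coeff_poly_two hn, one_div_twelve_le_sq hw]

end R

theorem case_one_inequality_general {n : ℕ} {w : ℝ} (hw : 0 ≤ w)
    (h : 1 ≤ (n + 2) * (n + 1) * n * (n - 1) / 2 * w ^ 2) :
    R n w ≤ w * deriv (R n) w := by
  have hquad : (R.poly n).coeff 0 ≤ ((2 : ℕ) - 1) * (R.poly n).coeff 2 * w ^ 2 := by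
    have htwo : ((2 : ℕ) : ℝ) - 1 = 1 := by norm_num
    rwa [R.coeff_poly_zero, R.coeff_poly_two, htwo, one_mul]
  rw [← R.eval_poly, R.deriv_eq_eval_derivative_poly]
  exact eval_le_mul_eval_derivative (fun m _ ↦ R.coeff_poly_nonneg n m) hw two_ne_zero hquad

/-- For `n ≥ 2` and `w ≥ 1/(2√3)`, one has `w R_n'(w) ≥ R_n(w)`. -/
theorem case_one_inequality (n : ℕ) (hn : 2 ≤ n) (w : ℝ)
    (hw : 1 / (2 * Real.sqrt 3) ≤ w) :
    R n w ≤ w * deriv (R n) w := by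
  have hw0 : 0 ≤ w := le_trans (by positivity) hw
  exact case_one_inequality_general hw0
    (R.coeff_poly_two n ▸ R.one_le_coeff_poly_two_mul_sq hn hw)
end

section
/- For every integer n ≥ 2 and every real number w with 0 < w ≤ 1/(2√3), one has R_n'(w) ≥ 2·R_n(w). -/
/-!
The coefficients `a m` of `R n` satisfy `(m + 1) a (m + 1) = (n + m + 1) (n - m) a m`. Hence
`(1 + 2 x) R n' - 2 n R n` has the coefficients `(n - m) (n + m - 1) a m`, which are nonnegative,
so that `R n' ≥ 2 n / (1 + 2 x) * R n` on `[0, ∞)`, and the factor is at least `2` as soon as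
`2 x + 1 ≤ n`.
-/

open Finset

namespace R

/-- The coefficient of `x ^ m` in `R n`, for `m ≤ n`. For `m > n` the subtraction `n - m` is
truncated, and the value is not the coefficient `0`. -/
noncomputable def coeff (n m : ℕ) : ℝ :=
  (n + m).factorial / (m.factorial * (n - m).factorial)

theorem eq_sum_coeff (n : ℕ) (x : ℝ) : R n x = ∑ m ∈ range (n + 1), coeff n m * x ^ m := rfl

theorem coeff_nonneg (n m : ℕ) : 0 ≤ coeff n m := by
  unfold coeff
  positivity

theorem succ_mul_coeff_succ {n m : ℕ} (h : m < n) :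
    (m + 1) * coeff n (m + 1) = (n + m + 1) * (n - m) * coeff n m := by
  have hsub : n - m = n - (m + 1) + 1 := by lia
  have hcast : ((n - (m + 1) : ℕ) : ℝ) + 1 = n - m := by
    rw [Nat.cast_sub h]
    push_cast
    ring
  have hne : (n : ℝ) - m ≠ 0 := sub_ne_zero.2 (by exact_mod_cast h.ne')
  rw [coeff, coeff, hsub, ← add_assoc n m 1]
  simp only [Nat.factorial_succ, Nat.cast_mul, Nat.cast_succ, Nat.cast_add, hcast]
  field_simp

theorem nonneg (n : ℕ) {x : ℝ} (hx : 0 ≤ x) : 0 ≤ R n x :=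
  sum_nonneg fun m _ ↦ mul_nonneg (coeff_nonneg n m) (pow_nonneg hx m)

theorem deriv_eq_sum (n : ℕ) (x : ℝ) :
    deriv (R n) x = ∑ m ∈ range (n + 1), coeff n m * (m * x ^ (m - 1)) :=
  (HasDerivAt.fun_sum fun m _ ↦ (hasDerivAt_pow m x).const_mul (coeff n m)).deriv

theorem deriv_eq_sum_coeff (n : ℕ) (x : ℝ) :
    deriv (R n) x = ∑ m ∈ range (n + 1), (n + m + 1) * (n - m) * coeff n m * x ^ m := by
  rw [deriv_eq_sum, sum_range_succ', sum_range_succ]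
  simp only [Nat.cast_zero, zero_mul, mul_zero, add_zero, sub_self]
  refine sum_congr rfl fun m hm ↦ ?_
  rw [← succ_mul_coeff_succ (mem_range.1 hm), Nat.add_sub_cancel]
  push_cast
  ring

theorem mul_deriv_eq_sum_coeff (n : ℕ) (x : ℝ) :
    x * deriv (R n) x = ∑ m ∈ range (n + 1), m * coeff n m * x ^ m := by
  rw [deriv_eq_sum, mul_sum]
  refine sum_congr rfl fun m _ ↦ ?_
  cases m with
  | zero => simp
  | succ m => rw [Nat.add_sub_cancel]; ring

theorem one_add_two_mul_mul_deriv_sub (n : ℕ) (x : ℝ) :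
    (1 + 2 * x) * deriv (R n) x - 2 * n * R n x =
      ∑ m ∈ range (n + 1), (n - m) * (n + m - 1) * coeff n m * x ^ m := by
  calc
    _ = deriv (R n) x + 2 * (x * deriv (R n) x) - 2 * n * R n x := by ring
    _ = _ := by
      rw [mul_deriv_eq_sum_coeff, deriv_eq_sum_coeff, eq_sum_coeff, mul_sum, mul_sum,
        ← sum_add_distrib, ← sum_sub_distrib]
      exact sum_congr rfl fun m _ ↦ by ring

theorem two_mul_mul_le_one_add_two_mul_mul_deriv (n : ℕ) {x : ℝ} (hx : 0 ≤ x) :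
    2 * n * R n x ≤ (1 + 2 * x) * deriv (R n) x := by
  rw [← sub_nonneg, one_add_two_mul_mul_deriv_sub]
  refine sum_nonneg fun m hm ↦ ?_
  have hfactor : 0 ≤ ((n : ℝ) - m) * (n + m - 1) := by
    obtain rfl | hmn := (mem_range_succ_iff.1 hm).eq_or_lt
    · simp
    · have hle : (m : ℝ) + 1 ≤ n := by exact_mod_cast hmn
      exact mul_nonneg (by linarith) (by linarith [m.cast_nonneg (α := ℝ)])
  exact mul_nonneg (mul_nonneg hfactor (coeff_nonneg n m)) (pow_nonneg hx m)

end R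

theorem case_two_inequality_general {n : ℕ} {w : ℝ} (hw0 : 0 ≤ w) (hw : 2 * w + 1 ≤ n) :
    2 * R n w ≤ deriv (R n) w := by
  have hpos : 0 < 1 + 2 * w := by linarith
  refine le_of_mul_le_mul_left ?_ hpos
  calc
    (1 + 2 * w) * (2 * R n w) ≤ n * (2 * R n w) := by
      have hR := R.nonneg n hw0
      gcongr
      linarith
    _ = 2 * n * R n w := by ring
    _ ≤ (1 + 2 * w) * deriv (R n) w := R.two_mul_mul_le_one_add_two_mul_mul_deriv n hw0

theorem one_div_two_mul_sqrt_three_le_one_half : 1 / (2 * √3) ≤ (1 / 2 : ℝ) := by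
  have hsqrt : 1 ≤ √(3 : ℝ) := Real.one_le_sqrt.2 (by norm_num)
  exact one_div_le_one_div_of_le two_pos (by linarith)

/-- For `n ≥ 2` and `0 < w ≤ 1/(2√3)`, one has `R_n'(w) ≥ 2 R_n(w)`. -/
theorem case_two_inequality (n : ℕ) (hn : 2 ≤ n) (w : ℝ)
    (hw0 : 0 < w) (hw : w ≤ 1 / (2 * Real.sqrt 3)) :
    2 * R n w ≤ deriv (R n) w := by
  have hn' : (2 : ℝ) ≤ n := by exact_mod_cast hn
  exact case_two_inequality_general hw0.le (by linarith [one_div_two_mul_sqrt_three_le_one_half])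
end

section
/- Let γ > 1 be real, let n ≥ 2 be an integer, and let w₀ be a real number with 0 < w₀ ≤ 1/(2√3) satisfying (1 − γ)·R_n(w₀) + 2·w₀²·R_n'(w₀) = 0. Then 4w₀² ≤ γ − 1, and hence −1/(2w₀) ≤ −1/√(γ−1). -/
/-!
Let `c m` be the coefficient of `x ^ m` in `R n`. The ratio of consecutive coefficients gives
`(m + 1) c (m + 1) = (n + m + 1) (n - m) c m`, so the derivative `D` of `R n` is a weighted version
of the sum `S` of the terms of `R n` of degree less than `n`, with every weight at least `2 n`. The
missing leading term of `R n` is `2 x` times the one before it, hence at most `2 x S`. Together,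
`2 n R n x ≤ (1 + 2 x) D x` for `x ≥ 0`, which is `2 R n x ≤ D x` or better once `1 + 2 x ≤ n`; the
root equation reads `γ - 1 = 2 x² D x / R n x`.
-/

/-- The coefficient `(n + m)! / (m! (n - m)!)` of `x ^ m` in `R n`; it is meant for `m ≤ n` only,
as `n - m` is truncated. -/
noncomputable def coeffR (n m : ℕ) : ℝ :=
  (Nat.factorial (n + m) : ℝ) / ((Nat.factorial m : ℝ) * (Nat.factorial (n - m) : ℝ))

lemma R_eq_sum_coeffR (n : ℕ) (x : ℝ) :
    R n x = ∑ m ∈ Finset.range (n + 1), coeffR n m * x ^ m :=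
  rfl

lemma coeffR_pos (n m : ℕ) : 0 < coeffR n m := by
  unfold coeffR
  positivity

lemma coeffR_succ_mul {n m : ℕ} (hm : m < n) :
    coeffR n (m + 1) * (m + 1) = (n + m + 1) * (n - m) * coeffR n m := by
  obtain ⟨d, rfl⟩ : ∃ d, n = m + (d + 1) := Nat.exists_eq_add_of_lt hm
  have hsub : m + (d + 1) - (m + 1) = d := by omega
  unfold coeffR
  rw [hsub, Nat.add_sub_cancel_left, ← Nat.add_assoc (m + (d + 1)) m 1, Nat.factorial_succ,
    Nat.factorial_succ d, Nat.factorial_succ m]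
  push_cast
  field_simp
  ring

lemma coeffR_succ_self (k : ℕ) : coeffR (k + 1) (k + 1) = 2 * coeffR (k + 1) k := by
  have hrec := coeffR_succ_mul k.lt_succ_self
  push_cast at hrec
  have hk : (k : ℝ) + 1 ≠ 0 := by positivity
  exact mul_right_cancel₀ hk (by linear_combination hrec)

lemma R_pos (n : ℕ) {x : ℝ} (hx : 0 < x) : 0 < R n x :=
  Finset.sum_pos (fun m _ => mul_pos (coeffR_pos n m) (pow_pos hx m)) Finset.nonempty_range_add_one

lemma deriv_R (n : ℕ) (x : ℝ) :
    deriv (R n) x = ∑ m ∈ Finset.range n, (n + m + 1) * (n - m) * coeffR n m * x ^ m := by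
  have hderiv : HasDerivAt (R n)
      (∑ m ∈ Finset.range (n + 1), coeffR n m * (m * x ^ (m - 1))) x :=
    HasDerivAt.fun_sum fun m _ => (hasDerivAt_pow m x).const_mul (coeffR n m)
  rw [hderiv.deriv, Finset.sum_range_succ', Nat.cast_zero, zero_mul, mul_zero, add_zero]
  refine Finset.sum_congr rfl fun m hm => ?_
  rw [← coeffR_succ_mul (Finset.mem_range.1 hm), Nat.add_sub_cancel, Nat.cast_succ, mul_assoc]

lemma two_mul_le_add_mul_sub {n m : ℕ} (hm : m < n) :
    (2 * n : ℝ) ≤ (n + m + 1) * (n - m) := by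
  have hm' : (m : ℝ) + 1 ≤ n := mod_cast hm
  have hprod : (0 : ℝ) ≤ (n - (m + 1)) * (n + m) :=
    mul_nonneg (sub_nonneg.2 hm') (by positivity)
  linarith

lemma two_mul_sum_le_deriv_R (n : ℕ) {x : ℝ} (hx : 0 ≤ x) :
    2 * n * ∑ m ∈ Finset.range n, coeffR n m * x ^ m ≤ deriv (R n) x := by
  rw [deriv_R, Finset.mul_sum]
  refine Finset.sum_le_sum fun m hm => ?_
  rw [← mul_assoc]
  have hcoeff := (coeffR_pos n m).le
  gcongr ?_ * _ * _
  exact two_mul_le_add_mul_sub (Finset.mem_range.1 hm)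

lemma R_succ_le (k : ℕ) {x : ℝ} (hx : 0 ≤ x) :
    R (k + 1) x ≤ (1 + 2 * x) * ∑ m ∈ Finset.range (k + 1), coeffR (k + 1) m * x ^ m := by
  set S := ∑ m ∈ Finset.range (k + 1), coeffR (k + 1) m * x ^ m
  have hlast : coeffR (k + 1) k * x ^ k ≤ S :=
    Finset.single_le_sum (f := fun m => coeffR (k + 1) m * x ^ m)
      (fun m _ => mul_nonneg (coeffR_pos _ m).le (pow_nonneg hx m)) (Finset.self_mem_range_succ k)
  calc R (k + 1) x = S + coeffR (k + 1) (k + 1) * x ^ (k + 1) := by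
        rw [R_eq_sum_coeffR, Finset.sum_range_succ]
    _ = S + 2 * x * (coeffR (k + 1) k * x ^ k) := by
        rw [coeffR_succ_self]
        ring
    _ ≤ S + 2 * x * S := by gcongr
    _ = (1 + 2 * x) * S := by ring

theorem two_mul_mul_R_le_mul_deriv_R (n : ℕ) {x : ℝ} (hx : 0 ≤ x) :
    2 * n * R n x ≤ (1 + 2 * x) * deriv (R n) x := by
  rcases n with _ | k
  · simp [deriv_R]
  · set S := ∑ m ∈ Finset.range (k + 1), coeffR (k + 1) m * x ^ m
    calc 2 * ↑(k + 1) * R (k + 1) x ≤ 2 * ↑(k + 1) * ((1 + 2 * x) * S) := by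
          gcongr
          exact R_succ_le k hx
      _ = (1 + 2 * x) * (2 * ↑(k + 1) * S) := by ring
      _ ≤ (1 + 2 * x) * deriv (R (k + 1)) x := by
          gcongr
          exact two_mul_sum_le_deriv_R (k + 1) hx

theorem two_mul_R_le_deriv_R {n : ℕ} {x : ℝ} (hx : 0 < x) (hn : 1 + 2 * x ≤ n) :
    2 * R n x ≤ deriv (R n) x := by
  have hR := R_pos n hx
  refine le_of_mul_le_mul_left ?_ (by positivity : 0 < 1 + 2 * x)
  calc (1 + 2 * x) * (2 * R n x) ≤ n * (2 * R n x) := by gcongr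
    _ = 2 * n * R n x := by ring
    _ ≤ (1 + 2 * x) * deriv (R n) x := two_mul_mul_R_le_mul_deriv_R n hx.le

theorem case_two_bound_general (γ : ℝ) (n : ℕ) (w₀ : ℝ) (hw0 : 0 < w₀) (hn : 1 + 2 * w₀ ≤ n)
    (hroot : (1 - γ) * R n w₀ + 2 * w₀ ^ 2 * deriv (R n) w₀ = 0) :
    4 * w₀ ^ 2 ≤ γ - 1 ∧ -1 / (2 * w₀) ≤ -1 / Real.sqrt (γ - 1) := by
  have hsq : 4 * w₀ ^ 2 ≤ γ - 1 := by
    refine le_of_mul_le_mul_right ?_ (R_pos n hw0)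
    calc 4 * w₀ ^ 2 * R n w₀ = 2 * w₀ ^ 2 * (2 * R n w₀) := by ring
      _ ≤ 2 * w₀ ^ 2 * deriv (R n) w₀ := by
          gcongr
          exact two_mul_R_le_deriv_R hw0 hn
      _ = (γ - 1) * R n w₀ := by linear_combination hroot
  have hsqrt : 2 * w₀ ≤ Real.sqrt (γ - 1) := Real.le_sqrt_of_sq_le (by linarith)
  refine ⟨hsq, ?_⟩
  rw [neg_div, neg_div]
  exact neg_le_neg (one_div_le_one_div_of_le (by positivity) hsqrt)

/-- Estimate (4.9): if `γ > 1`, `n ≥ 2` and `0 < w₀ ≤ 1/(2√3)` is a root of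
`(1 − γ) R_n(w) + 2 w² R_n'(w) = 0`, then `4w₀² ≤ γ − 1` and `−1/(2w₀) ≤ −1/√(γ−1)`. -/
theorem case_two_bound (γ : ℝ) (hγ : 1 < γ) (n : ℕ) (hn : 2 ≤ n) (w₀ : ℝ)
    (hw0 : 0 < w₀) (hw : w₀ ≤ 1 / (2 * Real.sqrt 3))
    (hroot : (1 - γ) * R n w₀ + 2 * w₀ ^ 2 * deriv (R n) w₀ = 0) :
    4 * w₀ ^ 2 ≤ γ - 1 ∧ -1 / (2 * w₀) ≤ -1 / Real.sqrt (γ - 1) := by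
  have hhalf : 1 / (2 * Real.sqrt 3) ≤ 1 / 2 := one_div_le_one_div_of_le two_pos
    (le_mul_of_one_le_right zero_le_two (Real.one_le_sqrt.2 (by norm_num)))
  have hn' : (2 : ℝ) ≤ n := mod_cast hn
  exact case_two_bound_general γ n w₀ hw0 (by linarith) hroot
end

section
/- For every real number γ > 1, the set { w ∈ ℝ : w > 0 and there exists an integer n ≥ 1 with (1 − γ)·R_n(w) + 2·w²·R_n'(w) = 0 } is infinite. -/
/-!
Let `a_m` be the coefficients of `R_n`. From `(m + 1) a_{m+1} = (n + m + 1) (n - m) a_m` one sees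
that `(1 + 2z) R_n' - 2n R_n` has the coefficients `(n - m) (n + m - 1) a_m ≥ 0`. Hence
`R_n'(x) / R_n(x) ≥ 2n / (1 + 2x)` for `x ≥ 0`, which is unbounded in `n`. So for any `ε > 0` and
large `n` the function `(1 - γ) R_n(w) + 2 w² R_n'(w)`, negative at `w = 0`, is positive at `w = ε`
and vanishes somewhere in `(0, ε)`: the roots accumulate at `0`.
-/

open Polynomial Filter Topology Set

/-- The coefficient `(n + m)! / (m! (n - m)!)` of `z ^ m` in `R_n`, extended by `0` to `m > n`. This
product form is a natural number by construction and vanishes for `m > n` without a case split. -/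
def besselCoeff (n m : ℕ) : ℕ :=
  (n + m).choose m * n.descFactorial m

theorem besselCoeff_zero_right (n : ℕ) : besselCoeff n 0 = 1 := by
  simp [besselCoeff]

theorem besselCoeff_eq_zero_of_lt {n m : ℕ} (h : n < m) : besselCoeff n m = 0 := by
  rw [besselCoeff, Nat.descFactorial_eq_zero_iff_lt.mpr h, mul_zero]

theorem besselCoeff_mul_factorial_mul_factorial {n m : ℕ} (h : m ≤ n) :
    besselCoeff n m * (m.factorial * (n - m).factorial) = (n + m).factorial := by
  rw [← Nat.add_choose_mul_factorial_mul_factorial n m, ← Nat.factorial_mul_descFactorial h,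
    besselCoeff]
  ring

-- The truncated `n - m` is harmless: both sides vanish for `m > n`.
theorem succ_mul_besselCoeff_succ (n m : ℕ) :
    (m + 1) * besselCoeff n (m + 1) = (n + m + 1) * (n - m) * besselCoeff n m := by
  have hchoose := Nat.add_one_mul_choose_eq (n + m) m
  calc (m + 1) * besselCoeff n (m + 1)
      = ((n + m + 1).choose (m + 1) * (m + 1)) * ((n - m) * n.descFactorial m) := by
        rw [besselCoeff, Nat.descFactorial_succ, ← add_assoc]
        ring
    _ = (n + m + 1) * (n - m) * besselCoeff n m := by
        rw [← hchoose, besselCoeff]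
        ring

theorem two_mul_besselCoeff_le (n m : ℕ) :
    2 * n * besselCoeff n m ≤ (m + 1) * besselCoeff n (m + 1) + 2 * m * besselCoeff n m := by
  rcases lt_or_ge n m with hnm | hmn
  · simp [besselCoeff_eq_zero_of_lt hnm]
  · rw [succ_mul_besselCoeff_succ, ← add_mul]
    refine Nat.mul_le_mul_right _ ?_
    obtain ⟨k, rfl⟩ := Nat.exists_eq_add_of_le hmn
    rw [Nat.add_sub_cancel_left]
    rcases k with _ | k
    · simp
    · nlinarith

theorem eval_le_eval_of_coeff_le {K : Type*} [Semiring K] [PartialOrder K] [IsOrderedRing K]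
    {p q : K[X]} (h : ∀ m, p.coeff m ≤ q.coeff m) {x : K} (hx : 0 ≤ x) :
    p.eval x ≤ q.eval x := by
  have hp : p.natDegree < max p.natDegree q.natDegree + 1 := by omega
  have hq : q.natDegree < max p.natDegree q.natDegree + 1 := by omega
  rw [eval_eq_sum_range' hp, eval_eq_sum_range' hq]
  exact Finset.sum_le_sum fun m _ ↦ mul_le_mul_of_nonneg_right (h m) (pow_nonneg hx m)

theorem coeff_X_mul_derivative {K : Type*} [Semiring K] (p : K[X]) (m : ℕ) :
    (X * derivative p).coeff m = m * p.coeff m := by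
  cases m with
  | zero => rw [coeff_X_mul_zero, Nat.cast_zero, zero_mul]
  | succ k => rw [coeff_X_mul, coeff_derivative, ← Nat.cast_succ, Nat.cast_comm]

/-- The polynomial `R_n` over an arbitrary semiring. It is `y_n(2X)`, where `y_n` is the `n`-th
Bessel polynomial in the normalization `y_n(0) = 1`. -/
noncomputable def besselPoly (K : Type*) [Semiring K] (n : ℕ) : K[X] :=
  ∑ m ∈ Finset.range (n + 1), monomial m (besselCoeff n m : K)

theorem coeff_besselPoly (K : Type*) [Semiring K] (n m : ℕ) :
    (besselPoly K n).coeff m = besselCoeff n m := by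
  simp only [besselPoly, finsetSum_coeff, coeff_monomial, Finset.sum_ite_eq', Finset.mem_range,
    Nat.lt_succ_iff, ite_eq_left_iff, not_le]
  intro hnm
  rw [besselCoeff_eq_zero_of_lt hnm, Nat.cast_zero]

theorem eval_zero_besselPoly (K : Type*) [Semiring K] (n : ℕ) : (besselPoly K n).eval 0 = 1 := by
  rw [← coeff_zero_eq_eval_zero, coeff_besselPoly, besselCoeff_zero_right, Nat.cast_one]

theorem one_le_eval_besselPoly {K : Type*} [Semiring K] [PartialOrder K] [IsOrderedRing K]
    (n : ℕ) {x : K} (hx : 0 ≤ x) : 1 ≤ (besselPoly K n).eval x := by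
  have hcoeff (m : ℕ) : (1 : K[X]).coeff m ≤ (besselPoly K n).coeff m := by
    rw [coeff_besselPoly, coeff_one]
    split_ifs with hm
    · rw [hm, besselCoeff_zero_right, Nat.cast_one]
    · exact Nat.cast_nonneg _
  simpa only [eval_one] using eval_le_eval_of_coeff_le hcoeff hx

theorem two_mul_eval_besselPoly_le_eval_derivative {K : Type*} [CommSemiring K] [PartialOrder K]
    [IsOrderedRing K] (n : ℕ) {x : K} (hx : 0 ≤ x) :
    2 * n * (besselPoly K n).eval x ≤ (1 + 2 * x) * (derivative (besselPoly K n)).eval x := by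
  have hcoeff (m : ℕ) : (C (2 * n : K) * besselPoly K n).coeff m ≤
      (derivative (besselPoly K n) + C 2 * (X * derivative (besselPoly K n))).coeff m := by
    rw [coeff_add, coeff_C_mul, coeff_C_mul, coeff_X_mul_derivative, coeff_derivative,
      coeff_besselPoly, coeff_besselPoly, mul_comm (besselCoeff n (m + 1) : K), ← mul_assoc]
    exact_mod_cast Nat.mono_cast (α := K) (two_mul_besselCoeff_le n m)
  calc 2 * n * (besselPoly K n).eval x
      = (C (2 * n : K) * besselPoly K n).eval x := by rw [eval_C_mul]
    _ ≤ (derivative (besselPoly K n) + C 2 * (X * derivative (besselPoly K n))).eval x :=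
        eval_le_eval_of_coeff_le hcoeff hx
    _ = (1 + 2 * x) * (derivative (besselPoly K n)).eval x := by
        rw [eval_add, eval_C_mul, eval_mul, eval_X]
        ring

theorem eventually_mul_eval_besselPoly_lt_eval_derivative {K : Type*} [Field K] [LinearOrder K]
    [IsStrictOrderedRing K] [Archimedean K] (c : K) {x : K} (hx : 0 ≤ x) :
    ∀ᶠ n in atTop, c * (besselPoly K n).eval x < (derivative (besselPoly K n)).eval x := by
  have hlarge := tendsto_natCast_atTop_atTop.eventually_gt_atTop ((1 + 2 * x) * c / 2)
  filter_upwards [hlarge] with n hn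
  have hpos : 0 < (besselPoly K n).eval x := one_pos.trans_le (one_le_eval_besselPoly n hx)
  refine lt_of_mul_lt_mul_left ?_ (by positivity : 0 ≤ 1 + 2 * x)
  calc (1 + 2 * x) * (c * (besselPoly K n).eval x)
      = (1 + 2 * x) * c * (besselPoly K n).eval x := by ring
    _ < 2 * n * (besselPoly K n).eval x := mul_lt_mul_of_pos_right (by linarith) hpos
    _ ≤ (1 + 2 * x) * (derivative (besselPoly K n)).eval x :=
        two_mul_eval_besselPoly_le_eval_derivative n hx

theorem R_eq_eval_besselPoly (n : ℕ) : R n = fun x ↦ (besselPoly ℝ n).eval x := by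
  funext x
  simp only [R, besselPoly, eval_finsetSum, eval_monomial]
  refine Finset.sum_congr rfl fun m hm ↦ ?_
  have hmn : m ≤ n := Nat.lt_succ_iff.mp (Finset.mem_range.mp hm)
  congr 1
  rw [div_eq_iff (by positivity)]
  exact_mod_cast (besselCoeff_mul_factorial_mul_factorial hmn).symm

theorem deriv_R_s10 (n : ℕ) (x : ℝ) : deriv (R n) x = (derivative (besselPoly ℝ n)).eval x := by
  rw [R_eq_eval_besselPoly, Polynomial.deriv]

theorem eventually_exists_root_mem_Ioo {γ ε : ℝ} (hγ : 1 < γ) (hε : 0 < ε) :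
    ∀ᶠ n in atTop, ∃ w ∈ Ioo 0 ε, (1 - γ) * R n w + 2 * w ^ 2 * deriv (R n) w = 0 := by
  have hlarge := eventually_mul_eval_besselPoly_lt_eval_derivative ((γ - 1) / (2 * ε ^ 2)) hε.le
  filter_upwards [hlarge] with n hn
  simp_rw [deriv_R_s10, R_eq_eval_besselPoly]
  set p := besselPoly ℝ n
  have hcont : Continuous fun w ↦ (1 - γ) * p.eval w + 2 * w ^ 2 * (derivative p).eval w := by
    fun_prop
  have hneg : (1 - γ) * p.eval 0 + 2 * 0 ^ 2 * (derivative p).eval 0 < 0 := by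
    rw [eval_zero_besselPoly]
    linarith
  have hpos : 0 < (1 - γ) * p.eval ε + 2 * ε ^ 2 * (derivative p).eval ε := by
    rw [div_mul_eq_mul_div, div_lt_iff₀ (by positivity)] at hn
    linarith
  exact intermediate_value_Ioo hε.le hcont.continuousOn ⟨hneg, hpos⟩

/-- For every real `γ > 1`, the set of positive real roots of the equations
`(1 − γ) R_n(w) + 2 w² R_n'(w) = 0`, `n ≥ 1`, is infinite. -/
theorem infinitely_many_roots (γ : ℝ) (hγ : 1 < γ) :
    {w : ℝ | 0 < w ∧ ∃ n : ℕ, 1 ≤ n ∧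
      (1 - γ) * R n w + 2 * w ^ 2 * deriv (R n) w = 0}.Infinite := by
  refine Set.Infinite.of_accPt (x := 0) (accPt_iff_frequently_nhdsNE.mpr ?_)
  refine Frequently.filter_mono ?_ (nhdsGT_le_nhdsNE 0)
  refine (nhdsGT_basis 0).frequently_iff.mpr fun ε hε ↦ ?_
  obtain ⟨n, ⟨w, hw, hroot⟩, hn⟩ :=
    ((eventually_exists_root_mem_Ioo hγ hε).and (eventually_ge_atTop 1)).exists
  exact ⟨w, hw, hw.1, n, hn, hroot⟩
end
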